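/- Let g be a Markov interval map with g(Γ ∩ dom(g)) ⊆ Γ and x ∈ E_g. On the Hilbert space ℓ²(X): for each pair (i,j) with a_{ij} = 1 there is a unique bounded operator S_{ij} with S_{ij} δ_y = δ_{(g|_{I_i})⁻¹(y)} for y ∈ I_j ∩ X and S_{ij} δ_y = 0 for y ∈ X \ I_j; let P_i be multiplication by χ_{I_i ∩ X}. Then: (i) the P_i are self-adjoint idempotents with P_i P_j = 0 for i ≠ j; (ii) S_{ij}* S_{ij} = P_j; (iii) P_i S_{ij} S_{ij}* = S_{ij} S_{ij}* (i.e., S_{ij} S_{ij}* ≤ P_i), and in particular each S_{ij} is a partial isometry; and (iv) if i is such that â_{i ι(x)} = 0 and a_{ij} = 1 for at least one j, then P_i = Σ_{j : a_{ij}=1} S_{ij} S_{ij}*. -/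

import Mathlib

open Set Function

section

/-- The domain `⋃_{j<n} I_j` of a Markov interval map, where `I_j = [a j, b j]`
(indices `j = 0, …, n-1` correspond to the intervals `I_1, …, I_n` of the paper). -/
def mDom (n : ℕ) (a b : ℕ → ℝ) : Set ℝ := ⋃ j, ⋃ (_ : j < n), Icc (a j) (b j)

/-- The union of the (possibly empty) escape intervals `E_j = (b j, a (j+1))`,
for `j + 1 < n`. -/
def mEsc (n : ℕ) (a b : ℕ → ℝ) : Set ℝ := ⋃ j, ⋃ (_ : j + 1 < n), Ioo (b j) (a (j + 1))

/-- The set `Γ` of boundary points of the intervals `I_j = [a j, b j]`. -/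
def mGamma (n : ℕ) (a b : ℕ → ℝ) : Set ℝ := {y | ∃ j < n, y = a j ∨ y = b j}

/-- `g^k(x)` is defined: the iterates `x, g(x), …, g^(k-1)(x)` all lie in the domain. -/
def IterDef (g : ℝ → ℝ) (Dm : Set ℝ) (k : ℕ) (x : ℝ) : Prop := ∀ m < k, g^[m] x ∈ Dm

/-- `g` is a Markov interval map for the partition `I_j = [a j, b j]`, `j < n`, of the
interval `I = [a 0, b (n-1)]` minus the escape intervals `E_j = (b j, a (j+1))`:
on each `I_j`, `g` is continuous and strictly monotone, `im g = I`, and `g(I_i) ∩ dom g`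
is a nonempty union of intervals of the partition (Markov property).  (Values of `g`
outside of its domain `⋃_j I_j` are irrelevant.) -/
structure IsMarkovMap (n : ℕ) (a b : ℕ → ℝ) (g : ℝ → ℝ) : Prop where
  two_le : 2 ≤ n
  lt : ∀ j < n, a j < b j
  le : ∀ j, j + 1 < n → b j ≤ a (j + 1)
  mono : ∀ i < n, StrictMonoOn g (Icc (a i) (b i)) ∨ StrictAntiOn g (Icc (a i) (b i))
  cont : ∀ i < n, ContinuousOn g (Icc (a i) (b i))
  im : g '' mDom n a b = Icc (a 0) (b (n - 1))
  markov : ∀ i < n, ∃ S : Finset ℕ, S.Nonempty ∧ (∀ j ∈ S, j < n) ∧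
    g '' Icc (a i) (b i) ∩ mDom n a b = ⋃ j ∈ S, Icc (a j) (b j)

/-- The transition matrix entry `a_{ij} = 1`, i.e. `g(int I_i) ⊇ int I_j`. -/
def TransOne (a b : ℕ → ℝ) (g : ℝ → ℝ) (i j : ℕ) : Prop :=
  Ioo (a j) (b j) ⊆ g '' Ioo (a i) (b i)

/-- Given the final escape point `ex = e(x)` of the orbit of a point `x` of the escape
set, the set `X = {z ∈ I : g^k(z) = e(x)` for some `k ≥ 0}`. -/
def orbitSet (n : ℕ) (a b : ℕ → ℝ) (g : ℝ → ℝ) (ex : ℝ) : Set ℝ :=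
  {z | z ∈ Icc (a 0) (b (n - 1)) ∧ ∃ k, IterDef g (mDom n a b) k z ∧ g^[k] z = ex}

/-- The standard basis vector `δ_y` of `ℓ²(α)`. -/
noncomputable def diracVec {α : Type*} (y : α) : lp (fun _ : α => ℂ) 2 :=
  haveI := Classical.decEq α
  lp.single 2 y 1

/-- The defining property of the operator `S_{ij}` on `ℓ²(X)`:
`S_{ij} δ_y = δ_{(g|I_i)⁻¹ y}` for `y ∈ I_j ∩ X` and `S_{ij} δ_y = 0` for `y ∈ X \ I_j`;
here `wmap` is the inverse branch `(g|I_i)⁻¹` defined on `I_j ∩ X`. -/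
def IsShiftOp (n : ℕ) (a b : ℕ → ℝ) (g : ℝ → ℝ) (ex : ℝ) (j : ℕ)
    (wmap : ↥(orbitSet n a b g ex) → ↥(orbitSet n a b g ex))
    (S : lp (fun _ : ↥(orbitSet n a b g ex) => ℂ) 2 →L[ℂ]
      lp (fun _ : ↥(orbitSet n a b g ex) => ℂ) 2) : Prop :=
  ∀ y : ↥(orbitSet n a b g ex),
    ((y : ℝ) ∈ Icc (a j) (b j) → S (diracVec y) = diracVec (wmap y)) ∧
    ((y : ℝ) ∉ Icc (a j) (b j) → S (diracVec y) = 0)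

/-!
A partial bijection `f` of index sets induces an operator `S` on `ℓ²` whose adjoint is induced by
`f⁻¹`, so `S* S` and `S S*` are the coordinate projections onto the domain and the range of `f`.
The operator `S_{ij}` is induced by the inverse branch `I_j ∩ X → I_i ∩ X`, and all the relations
become statements about subsets of `X`. Since `X` avoids `Γ`, its parts `I_j ∩ X` are disjoint.
For (iv), a point `z ∈ I_i ∩ X` whose image is not the escape point `e(x)` has `g z ∈ I_j ∩ X` for
exactly one `j`, and `a_{ij} = 1` by the Markov property; hence `I_i ∩ X` is the disjoint union of
the ranges of the inverse branches.
-/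

section PartialShift

open scoped lp
variable {𝕜 α β : Type*} [RCLike 𝕜]

theorem sum_norm_elim_rpow_le (f : α ≃. β) {E : Type*} [NormedAddCommGroup E] {p : ENNReal}
    (hp : 0 < p.toReal) (ψ : lp (fun _ : β => E) p) (s : Finset α) :
    ∑ x ∈ s, ‖(f x).elim 0 ψ‖ ^ p.toReal ≤ ‖ψ‖ ^ p.toReal := by
  classical
  have hdisj : (s : Set α).PairwiseDisjoint fun x => (f x).toFinset := by
    intro x _ x' _ hne
    refine Finset.disjoint_left.2 fun y hy hy' => hne ?_
    exact f.inj (Option.mem_toFinset.1 hy) (Option.mem_toFinset.1 hy')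
  calc ∑ x ∈ s, ‖(f x).elim 0 ψ‖ ^ p.toReal
      = ∑ x ∈ s, ∑ y ∈ (f x).toFinset, ‖ψ y‖ ^ p.toReal := by
        refine Finset.sum_congr rfl fun x _ => ?_
        cases f x <;> simp [hp.ne']
    _ = ∑ y ∈ s.biUnion fun x => (f x).toFinset, ‖ψ y‖ ^ p.toReal :=
        (Finset.sum_biUnion hdisj).symm
    _ ≤ ‖ψ‖ ^ p.toReal := lp.sum_rpow_le_norm_rpow hp ψ _

variable (𝕜) in
/-- The operator `ℓ²(α) → ℓ²(β)` induced by a partial bijection `f`: it sends `δ_x` to `δ_{f x}`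
where `f` is defined and to `0` elsewhere. It is defined as composition with `f⁻¹`, extended by
zero. -/
noncomputable def partialShift (f : α ≃. β) : ℓ²(α, 𝕜) →L[𝕜] ℓ²(β, 𝕜) :=
  LinearMap.mkContinuous
    { toFun ψ := ⟨fun y => (f.symm y).elim 0 ψ,
        memℓp_gen' (sum_norm_elim_rpow_le f.symm (by norm_num) ψ)⟩
      map_add' φ ψ := by
        ext y
        change (f.symm y).elim 0 (⇑φ + ⇑ψ) = (f.symm y).elim 0 φ + (f.symm y).elim 0 ψ
        cases f.symm y <;> simp
      map_smul' c ψ := by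
        ext y
        change (f.symm y).elim 0 (c • ⇑ψ) = c • (f.symm y).elim 0 ψ
        cases f.symm y <;> simp }
    1 fun ψ => by
      rw [one_mul]
      exact lp.norm_le_of_forall_sum_le (by norm_num) (norm_nonneg _)
        (sum_norm_elim_rpow_le f.symm (by norm_num) ψ)

theorem partialShift_apply (f : α ≃. β) (ψ : ℓ²(α, 𝕜)) (y : β) :
    partialShift 𝕜 f ψ y = (f.symm y).elim 0 ψ :=
  rfl

theorem partialShift_single [DecidableEq α] [DecidableEq β] (f : α ≃. β) (x : α) :
    partialShift 𝕜 f (lp.single 2 x 1) = (f x).elim 0 fun y => lp.single 2 y 1 := by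
  ext y
  rw [partialShift_apply]
  cases hy : f.symm y with
  | none =>
    cases hx : f x with
    | none => rfl
    | some y' =>
      have hne : y ≠ y' := by
        rintro rfl
        simp [f.eq_some_iff.2 hx] at hy
      simp [hne]
  | some x' =>
    rw [f.eq_some_iff] at hy
    by_cases hxx : x' = x
    · subst hxx
      simp [hy]
    · cases hx : f x with
      | none => simp [hxx]
      | some y' =>
        have hne : y ≠ y' := by
          rintro rfl
          exact hxx (f.inj hy hx)
        simp [hxx, hne]

theorem adjoint_partialShift (f : α ≃. β) : (partialShift 𝕜 f).adjoint = partialShift 𝕜 f.symm := by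
  classical
  ext φ x
  have hx : (partialShift 𝕜 f).adjoint φ x
      = inner 𝕜 (partialShift 𝕜 f (lp.single 2 x 1)) φ := by
    rw [← ContinuousLinearMap.adjoint_inner_right, lp.inner_single_left]
    simp
  rw [hx, partialShift_single, partialShift_apply, PEquiv.symm_symm]
  cases f x <;> simp [lp.inner_single_left]

theorem partialShift_comp_adjoint_comp_self (f : α ≃. β) :
    partialShift 𝕜 f ∘L (partialShift 𝕜 f).adjoint ∘L partialShift 𝕜 f = partialShift 𝕜 f := by
  ext ψ y
  simp only [adjoint_partialShift, ContinuousLinearMap.comp_apply, partialShift_apply]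
  cases hy : f.symm y with
  | none => rfl
  | some x => simp [partialShift_apply, f.eq_some_iff.1 hy, hy]

variable (𝕜) in
open scoped Classical in
/-- The orthogonal projection of `ℓ²(α)` onto the sequences supported in `s`, that is,
multiplication by the characteristic function of `s`. -/
noncomputable def coordProj (s : Set α) : ℓ²(α, 𝕜) →L[𝕜] ℓ²(α, 𝕜) :=
  partialShift 𝕜 (PEquiv.ofSet s)

theorem coordProj_apply (s : Set α) (ψ : ℓ²(α, 𝕜)) : ⇑(coordProj 𝕜 s ψ) = s.indicator ψ := by
  ext x
  by_cases hx : x ∈ s <;> simp [coordProj, partialShift_apply, PEquiv.ofSet, PEquiv.symm, hx]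

theorem adjoint_coordProj (s : Set α) : (coordProj 𝕜 s).adjoint = coordProj 𝕜 s := by
  rw [coordProj, adjoint_partialShift, PEquiv.ofSet_symm]

theorem coordProj_comp_coordProj (s t : Set α) :
    coordProj 𝕜 s ∘L coordProj 𝕜 t = coordProj 𝕜 (s ∩ t) := by
  ext ψ x
  simp only [ContinuousLinearMap.comp_apply, coordProj_apply, indicator_indicator]

theorem coordProj_empty : coordProj 𝕜 (∅ : Set α) = 0 := by
  ext ψ x
  simp [coordProj_apply]

theorem coordProj_biUnion {ι : Type*} (F : Finset ι) {s : ι → Set α}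
    (hs : (F : Set ι).PairwiseDisjoint s) :
    coordProj 𝕜 (⋃ i ∈ F, s i) = ∑ i ∈ F, coordProj 𝕜 (s i) := by
  ext ψ x
  rw [coordProj_apply, sum_apply, lp.coeFn_sum, Finset.sum_apply,
    Finset.indicator_biUnion_apply _ _ hs]
  simp only [coordProj_apply]

theorem adjoint_comp_self_partialShift (f : α ≃. β) :
    (partialShift 𝕜 f).adjoint ∘L partialShift 𝕜 f = coordProj 𝕜 {x | (f x).isSome} := by
  ext ψ x
  simp only [adjoint_partialShift, ContinuousLinearMap.comp_apply, partialShift_apply,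
    PEquiv.symm_symm, coordProj_apply]
  cases hx : f x with
  | none => simp [hx]
  | some y => simp [partialShift_apply, f.eq_some_iff.2 hx, hx]

theorem self_comp_adjoint_partialShift (f : α ≃. β) :
    partialShift 𝕜 f ∘L (partialShift 𝕜 f).adjoint = coordProj 𝕜 {y | (f.symm y).isSome} := by
  simpa only [adjoint_partialShift, PEquiv.symm_symm] using
    adjoint_comp_self_partialShift (𝕜 := 𝕜) f.symm

end PartialShift

section PequivOn

variable {α β : Type*} {w : α → β} {s : Set α}

open scoped Classical in
/-- The partial bijection that restricts a function `w` to a set `s` on which it is injective. -/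
noncomputable def pequivOn (hw : InjOn w s) : α ≃. β where
  toFun x := if x ∈ s then some (w x) else none
  invFun y := if h : ∃ x ∈ s, w x = y then some h.choose else none
  inv x y := by
    simp only [Option.dite_none_right_eq_some, Option.some.injEq,
      Option.ite_none_right_eq_some]
    constructor
    · rintro ⟨h, rfl⟩
      exact h.choose_spec
    · rintro ⟨hx, rfl⟩
      have h : ∃ x' ∈ s, w x' = w x := ⟨x, hx, rfl⟩
      exact ⟨h, hw h.choose_spec.1 hx h.choose_spec.2⟩

theorem pequivOn_apply_of_mem (hw : InjOn w s) {x : α} (hx : x ∈ s) :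
    pequivOn hw x = some (w x) :=
  if_pos hx

theorem pequivOn_apply_of_notMem (hw : InjOn w s) {x : α} (hx : x ∉ s) : pequivOn hw x = none :=
  if_neg hx

theorem setOf_isSome_pequivOn (hw : InjOn w s) : {x | (pequivOn hw x).isSome} = s := by
  ext x
  by_cases hx : x ∈ s <;> simp [pequivOn_apply_of_mem, pequivOn_apply_of_notMem, hx]

theorem setOf_isSome_symm_pequivOn (hw : InjOn w s) :
    {y | ((pequivOn hw).symm y).isSome} = w '' s := by
  ext y
  simp [pequivOn, PEquiv.symm]

end PequivOn

section ShiftOperator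

variable {n : ℕ} {a b : ℕ → ℝ} {g : ℝ → ℝ} {ex : ℝ} {j : ℕ}

theorem diracVec_eq_single {α : Type*} [DecidableEq α] (y : α) :
    diracVec y = lp.single 2 y (1 : ℂ) := by
  unfold diracVec
  congr!

/-- The part `I_j ∩ X` of the orbit set `X` in the partition interval `I_j = [a j, b j]`, as a
subset of the type `X`. -/
def orbitCell (n : ℕ) (a b : ℕ → ℝ) (g : ℝ → ℝ) (ex : ℝ) (j : ℕ) : Set ↥(orbitSet n a b g ex) :=
  {z | (z : ℝ) ∈ Icc (a j) (b j)}

theorem isShiftOp_iff_eq_partialShift {w : ↥(orbitSet n a b g ex) → ↥(orbitSet n a b g ex)}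
    (hw : InjOn w (orbitCell n a b g ex j))
    {S : lp (fun _ : ↥(orbitSet n a b g ex) => ℂ) 2 →L[ℂ]
      lp (fun _ : ↥(orbitSet n a b g ex) => ℂ) 2} :
    IsShiftOp n a b g ex j w S ↔ S = partialShift ℂ (pequivOn hw) := by
  classical
  have hdirac : IsShiftOp n a b g ex j w S ↔
      ∀ y, S (lp.single 2 y 1) = partialShift ℂ (pequivOn hw) (lp.single 2 y 1) := by
    refine forall_congr' fun y => ?_
    rw [partialShift_single]
    simp only [diracVec_eq_single]
    by_cases hy : (y : ℝ) ∈ Icc (a j) (b j)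
    · simp [hy, pequivOn_apply_of_mem hw (x := y) hy]
    · simp [hy, pequivOn_apply_of_notMem hw (x := y) hy]
  refine hdirac.trans ⟨fun h => ?_, fun h y => h ▸ rfl⟩
  exact lp.ext_continuousLinearMap (by norm_num) fun y => ContinuousLinearMap.ext_ring (h y)

namespace IsShiftOp

variable {w : ↥(orbitSet n a b g ex) → ↥(orbitSet n a b g ex)}
  {S : lp (fun _ : ↥(orbitSet n a b g ex) => ℂ) 2 →L[ℂ]
    lp (fun _ : ↥(orbitSet n a b g ex) => ℂ) 2}

theorem adjoint_comp_self (hS : IsShiftOp n a b g ex j w S)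
    (hw : InjOn w (orbitCell n a b g ex j)) :
    S.adjoint ∘L S = coordProj ℂ (orbitCell n a b g ex j) := by
  rw [(isShiftOp_iff_eq_partialShift hw).1 hS, adjoint_comp_self_partialShift,
    setOf_isSome_pequivOn]

theorem self_comp_adjoint (hS : IsShiftOp n a b g ex j w S)
    (hw : InjOn w (orbitCell n a b g ex j)) :
    S ∘L S.adjoint = coordProj ℂ (w '' orbitCell n a b g ex j) := by
  rw [(isShiftOp_iff_eq_partialShift hw).1 hS, self_comp_adjoint_partialShift,
    setOf_isSome_symm_pequivOn]

theorem self_comp_adjoint_comp_self (hS : IsShiftOp n a b g ex j w S)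
    (hw : InjOn w (orbitCell n a b g ex j)) : S ∘L S.adjoint ∘L S = S := by
  rw [(isShiftOp_iff_eq_partialShift hw).1 hS, partialShift_comp_adjoint_comp_self]

end IsShiftOp

theorem eq_coordProj_orbitCell {P : lp (fun _ : ↥(orbitSet n a b g ex) => ℂ) 2 →L[ℂ]
      lp (fun _ : ↥(orbitSet n a b g ex) => ℂ) 2}
    (hP : ∀ ψ z, (P ψ) z = (Icc (a j) (b j)).indicator (fun _ => (1 : ℂ)) (z : ℝ) * ψ z) :
    P = coordProj ℂ (orbitCell n a b g ex j) := by
  ext ψ z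
  rw [hP, coordProj_apply]
  by_cases hz : (z : ℝ) ∈ Icc (a j) (b j)
  · rw [indicator_of_mem hz, one_mul, indicator_of_mem (show z ∈ orbitCell n a b g ex j from hz)]
  · rw [indicator_of_notMem hz, zero_mul,
      indicator_of_notMem (show z ∉ orbitCell n a b g ex j from hz)]

end ShiftOperator

/-- The hypotheses on a partition `I_j = [a j, b j]`, `j < n`, of `[a 0, b (n - 1)]` and on `g`
that make the transition structure of `g` Markovian: `g` maps `dom g` into `[a 0, b (n - 1)]` and
boundary points to boundary points, and each `g(I_i) ∩ dom g` is a union of intervals `I_j`. -/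
structure IsMarkovPartition (n : ℕ) (a b : ℕ → ℝ) (g : ℝ → ℝ) : Prop where
  left_le_right : ∀ j < n, a j ≤ b j
  right_le_left_succ : ∀ j, j + 1 < n → b j ≤ a (j + 1)
  mapsTo : MapsTo g (mDom n a b) (Icc (a 0) (b (n - 1)))
  mapsTo_boundary : MapsTo g (mGamma n a b) (mGamma n a b)
  markov : ∀ i < n, ∀ z ∈ Icc (a i) (b i), g z ∈ mDom n a b →
    ∃ j < n, g z ∈ Icc (a j) (b j) ∧ Icc (a j) (b j) ⊆ g '' Icc (a i) (b i)

section Partition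

variable {n : ℕ} {a b : ℕ → ℝ} {g : ℝ → ℝ} {i j k : ℕ} {ex z : ℝ}

theorem mem_mDom : z ∈ mDom n a b ↔ ∃ j < n, z ∈ Icc (a j) (b j) := by
  simp only [mDom, mem_iUnion, exists_prop]

theorem mGamma_subset_mDom (hab : ∀ j < n, a j ≤ b j) : mGamma n a b ⊆ mDom n a b := by
  rintro z ⟨j, hj, rfl | rfl⟩
  · exact mem_mDom.2 ⟨j, hj, left_mem_Icc.2 (hab j hj)⟩
  · exact mem_mDom.2 ⟨j, hj, right_mem_Icc.2 (hab j hj)⟩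

theorem mem_Ioo_of_notMem_mGamma (hi : i < n) (hz : z ∈ Icc (a i) (b i))
    (hzΓ : z ∉ mGamma n a b) : z ∈ Ioo (a i) (b i) :=
  ⟨hz.1.lt_of_ne fun h => hzΓ ⟨i, hi, Or.inl h.symm⟩,
    hz.2.lt_of_ne fun h => hzΓ ⟨i, hi, Or.inr h⟩⟩

theorem mem_mDom_of_mem_orbitSet (hz : z ∈ orbitSet n a b g ex) (hne : z ≠ ex) :
    z ∈ mDom n a b := by
  obtain ⟨-, m, hdef, hm⟩ := hz
  cases m with
  | zero => exact absurd hm hne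
  | succ m => exact hdef 0 m.succ_pos

theorem IsMarkovMap.isMarkovPartition (hg : IsMarkovMap n a b g)
    (hΓ : ∀ y ∈ mGamma n a b ∩ mDom n a b, g y ∈ mGamma n a b) : IsMarkovPartition n a b g where
  left_le_right j hj := (hg.lt j hj).le
  right_le_left_succ := hg.le
  mapsTo := mapsTo_iff_image_subset.2 hg.im.subset
  mapsTo_boundary y hy := hΓ y ⟨hy, mGamma_subset_mDom (fun j hj => (hg.lt j hj).le) hy⟩
  markov i hi z hz hgz := by
    obtain ⟨S, -, hS, himage⟩ := hg.markov i hi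
    have hgz' : g z ∈ ⋃ j ∈ S, Icc (a j) (b j) := himage ▸ ⟨mem_image_of_mem g hz, hgz⟩
    obtain ⟨j, hjS, hzj⟩ := mem_iUnion₂.1 hgz'
    have hsub : Icc (a j) (b j) ⊆ ⋃ j ∈ S, Icc (a j) (b j) :=
      subset_biUnion_of_mem (u := fun j => Icc (a j) (b j)) hjS
    exact ⟨j, hS j hjS, hzj, (hsub.trans himage.superset).trans inter_subset_left⟩

namespace IsMarkovPartition

theorem right_le_left (h : IsMarkovPartition n a b g) (hij : i < j) (hj : j < n) :
    b i ≤ a j := by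
  induction j, hij using Nat.le_induction with
  | base => exact h.right_le_left_succ i hj
  | succ k _ ih =>
    exact (ih (by omega)).trans
      ((h.left_le_right k (by omega)).trans (h.right_le_left_succ k hj))

theorem mem_mGamma_of_mem_Icc_of_mem_Icc (h : IsMarkovPartition n a b g) (hi : i < n) (hj : j < n)
    (hij : i ≠ j) (hzi : z ∈ Icc (a i) (b i)) (hzj : z ∈ Icc (a j) (b j)) :
    z ∈ mGamma n a b := by
  rcases hij.lt_or_gt with hlt | hlt
  · exact ⟨i, hi, Or.inr (hzi.2.antisymm ((h.right_le_left hlt hj).trans hzj.1))⟩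
  · exact ⟨j, hj, Or.inr (hzj.2.antisymm ((h.right_le_left hlt hi).trans hzi.1))⟩

theorem notMem_mDom_of_mem_escape (h : IsMarkovPartition n a b g) (hk : k + 1 < n)
    (hz : z ∈ Ioo (b k) (a (k + 1))) : z ∉ mDom n a b := by
  intro hdom
  obtain ⟨j, hj, hzj⟩ := mem_mDom.1 hdom
  have hright : ∀ i ≤ k, b i ≤ b k := fun i hik => by
    rcases hik.eq_or_lt with rfl | hlt
    · exact le_rfl
    · exact (h.right_le_left hlt (by omega)).trans (h.left_le_right k (by omega))
  rcases le_or_gt j k with hjk | hkj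
  · exact (hzj.2.trans (hright j hjk)).not_gt hz.1
  · have hleft : a (k + 1) ≤ a j := by
      rcases (Nat.succ_le_of_lt hkj).eq_or_lt with rfl | hlt
      · exact le_rfl
      · exact (h.left_le_right _ hk).trans (h.right_le_left hlt hj)
    exact (hleft.trans hzj.1).not_gt hz.2

theorem notMem_mGamma_of_mem_Ioo (h : IsMarkovPartition n a b g) (hj : j < n)
    (hz : z ∈ Ioo (a j) (b j)) : z ∉ mGamma n a b := by
  rintro ⟨k, hk, hzk⟩
  have hab := h.left_le_right k hk
  rcases lt_trichotomy k j with hkj | rfl | hjk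
  · have := h.right_le_left hkj hj
    rcases hzk with rfl | rfl <;> linarith [hz.1]
  · rcases hzk with rfl | rfl
    · exact hz.1.false
    · exact hz.2.false
  · have := h.right_le_left hjk hk
    rcases hzk with rfl | rfl <;> linarith [hz.2]

theorem exists_transOne (h : IsMarkovPartition n a b g) (hi : i < n) (hz : z ∈ Icc (a i) (b i))
    (hgz : g z ∈ mDom n a b) : ∃ j < n, TransOne a b g i j ∧ g z ∈ Icc (a j) (b j) := by
  obtain ⟨j, hj, hzj, hsub⟩ := h.markov i hi z hz hgz
  refine ⟨j, hj, fun v hv => ?_, hzj⟩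
  obtain ⟨u, hu, rfl⟩ := hsub (Ioo_subset_Icc_self hv)
  have huΓ : u ∉ mGamma n a b := fun huΓ =>
    h.notMem_mGamma_of_mem_Ioo hj hv (h.mapsTo_boundary huΓ)
  exact mem_image_of_mem g (mem_Ioo_of_notMem_mGamma hi hu huΓ)

theorem notMem_mGamma_of_mem_orbitSet (h : IsMarkovPartition n a b g) (hex : ex ∉ mDom n a b)
    (hz : z ∈ orbitSet n a b g ex) : z ∉ mGamma n a b := by
  intro hzΓ
  obtain ⟨-, m, -, rfl⟩ := hz
  exact hex (mGamma_subset_mDom h.left_le_right (h.mapsTo_boundary.iterate m hzΓ))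

theorem map_mem_orbitSet (h : IsMarkovPartition n a b g) (hex : ex ∉ mDom n a b)
    (hz : z ∈ orbitSet n a b g ex) (hdom : z ∈ mDom n a b) : g z ∈ orbitSet n a b g ex := by
  obtain ⟨-, m, hdef, hm⟩ := hz
  cases m with
  | zero => exact absurd (hm ▸ hdom) hex
  | succ m => exact ⟨h.mapsTo hdom, m, fun l hl => hdef (l + 1) (Nat.succ_lt_succ hl), hm⟩

theorem disjoint_orbitCell (h : IsMarkovPartition n a b g) (hex : ex ∉ mDom n a b) (hi : i < n)
    (hj : j < n) (hij : i ≠ j) : Disjoint (orbitCell n a b g ex i) (orbitCell n a b g ex j) :=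
  disjoint_left.2 fun z hzi hzj => h.notMem_mGamma_of_mem_orbitSet hex z.2
    (h.mem_mGamma_of_mem_Icc_of_mem_Icc hi hj hij hzi hzj)

end IsMarkovPartition

end Partition

section InverseBranch

variable {n : ℕ} {a b : ℕ → ℝ} {g : ℝ → ℝ} {ex : ℝ} {i j k : ℕ}
  {w : ↥(orbitSet n a b g ex) → ↥(orbitSet n a b g ex)}

/-- `w` is the inverse branch `(g|_{I_i})⁻¹` on `I_j ∩ X`: it sends each `y ∈ I_j ∩ X` to the
unique `g`-preimage of `y` in `I_i ∩ X`. Its values off `I_j ∩ X` are arbitrary. -/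
def IsInverseBranch (n : ℕ) (a b : ℕ → ℝ) (g : ℝ → ℝ) (ex : ℝ) (i j : ℕ)
    (w : ↥(orbitSet n a b g ex) → ↥(orbitSet n a b g ex)) : Prop :=
  ∀ y : ↥(orbitSet n a b g ex), (y : ℝ) ∈ Icc (a j) (b j) →
    (w y : ℝ) ∈ Icc (a i) (b i) ∧ g (w y) = y ∧
    ∀ u : ↥(orbitSet n a b g ex), (u : ℝ) ∈ Icc (a i) (b i) → g u = y → u = w y

namespace IsInverseBranch

theorem injOn (hw : IsInverseBranch n a b g ex i j w) : InjOn w (orbitCell n a b g ex j) := by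
  intro y hy y' hy' heq
  apply Subtype.ext
  rw [← (hw y hy).2.1, heq, (hw y' hy').2.1]

theorem mem_image_iff (hw : IsInverseBranch n a b g ex i j w) {z : ↥(orbitSet n a b g ex)} :
    z ∈ w '' orbitCell n a b g ex j ↔
      z ∈ orbitCell n a b g ex i ∧ g z ∈ orbitSet n a b g ex ∧ g z ∈ Icc (a j) (b j) := by
  constructor
  · rintro ⟨y, hy, rfl⟩
    obtain ⟨hwi, hgw, -⟩ := hw y hy
    exact ⟨hwi, hgw ▸ y.2, hgw ▸ hy⟩
  · rintro ⟨hzi, hX, hgz⟩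
    exact ⟨⟨g z, hX⟩, hgz, ((hw ⟨g z, hX⟩ hgz).2.2 z hzi rfl).symm⟩

theorem image_subset (hw : IsInverseBranch n a b g ex i j w) :
    w '' orbitCell n a b g ex j ⊆ orbitCell n a b g ex i :=
  fun _ hz => (hw.mem_image_iff.1 hz).1

theorem disjoint_image (hw : IsInverseBranch n a b g ex i j w) (h : IsMarkovPartition n a b g)
    (hex : ex ∉ mDom n a b) (hj : j < n) (hk : k < n) (hjk : j ≠ k)
    {w' : ↥(orbitSet n a b g ex) → ↥(orbitSet n a b g ex)}
    (hw' : IsInverseBranch n a b g ex i k w') :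
    Disjoint (w '' orbitCell n a b g ex j) (w' '' orbitCell n a b g ex k) := by
  refine disjoint_left.2 fun z hz hz' => ?_
  obtain ⟨-, hX, hgj⟩ := hw.mem_image_iff.1 hz
  obtain ⟨-, -, hgk⟩ := hw'.mem_image_iff.1 hz'
  exact h.notMem_mGamma_of_mem_orbitSet hex hX
    (h.mem_mGamma_of_mem_Icc_of_mem_Icc hj hk hjk hgj hgk)

end IsInverseBranch

open scoped Classical in
theorem orbitCell_eq_biUnion_image (h : IsMarkovPartition n a b g) (hex : ex ∉ mDom n a b)
    (hi : i < n) (hescape : ex ∉ g '' Ioo (a i) (b i))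
    {w : ℕ → ↥(orbitSet n a b g ex) → ↥(orbitSet n a b g ex)}
    (hw : ∀ j < n, TransOne a b g i j → IsInverseBranch n a b g ex i j (w j)) :
    orbitCell n a b g ex i = ⋃ j ∈ (Finset.range n).filter (fun j => TransOne a b g i j),
      w j '' orbitCell n a b g ex j := by
  refine Subset.antisymm (fun z hz => ?_) (iUnion₂_subset fun j hj => ?_)
  · have hX := h.map_mem_orbitSet hex z.2 (mem_mDom.2 ⟨i, hi, hz⟩)
    have hzint := mem_Ioo_of_notMem_mGamma hi hz (h.notMem_mGamma_of_mem_orbitSet hex z.2)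
    have hdom : g z ∈ mDom n a b :=
      mem_mDom_of_mem_orbitSet hX fun hgz => hescape ⟨z, hzint, hgz⟩
    obtain ⟨j, hj, ht, hgj⟩ := h.exists_transOne hi hz hdom
    exact mem_biUnion (Finset.mem_filter.2 ⟨Finset.mem_range.2 hj, ht⟩)
      ((hw j hj ht).mem_image_iff.2 ⟨hz, hX, hgj⟩)
  · obtain ⟨hj, ht⟩ := Finset.mem_filter.1 hj
    exact (hw j (Finset.mem_range.1 hj) ht).image_subset

open scoped Classical in
theorem coordProj_orbitCell_eq_sum (h : IsMarkovPartition n a b g) (hex : ex ∉ mDom n a b)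
    (hi : i < n) (hescape : ex ∉ g '' Ioo (a i) (b i))
    {w : ℕ → ↥(orbitSet n a b g ex) → ↥(orbitSet n a b g ex)}
    (hw : ∀ j < n, TransOne a b g i j → IsInverseBranch n a b g ex i j (w j)) :
    coordProj ℂ (orbitCell n a b g ex i) =
      ∑ j ∈ (Finset.range n).filter (fun j => TransOne a b g i j),
        coordProj ℂ (w j '' orbitCell n a b g ex j) := by
  rw [orbitCell_eq_biUnion_image h hex hi hescape hw, coordProj_biUnion]
  intro j hj k hk hjk
  obtain ⟨hj, htj⟩ := Finset.mem_filter.1 (Finset.mem_coe.1 hj)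
  obtain ⟨hk, htk⟩ := Finset.mem_filter.1 (Finset.mem_coe.1 hk)
  rw [Finset.mem_range] at hj hk
  exact (hw j hj htj).disjoint_image h hex hj hk hjk (hw k hk htk)

end InverseBranch

open scoped Classical in
theorem statement14_general {n : ℕ} {a b : ℕ → ℝ} {g : ℝ → ℝ} (hg : IsMarkovPartition n a b g)
    {ex : ℝ} (hex : ex ∉ mDom n a b)
    {w : ℕ → ℕ → ↥(orbitSet n a b g ex) → ↥(orbitSet n a b g ex)}
    (hw : ∀ i j, i < n → j < n → TransOne a b g i j → IsInverseBranch n a b g ex i j (w i j))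
    {P : ℕ → (lp (fun _ : ↥(orbitSet n a b g ex) => ℂ) 2 →L[ℂ]
      lp (fun _ : ↥(orbitSet n a b g ex) => ℂ) 2)}
    (hP : ∀ i ψ z, (P i ψ) z = (Icc (a i) (b i)).indicator (fun _ => (1 : ℂ)) (z : ℝ) * ψ z) :
    (∀ i j, i < n → j < n → TransOne a b g i j → ∃! S, IsShiftOp n a b g ex j (w i j) S) ∧
    (∀ i, i < n → (P i).adjoint = P i ∧ P i ∘L P i = P i ∧
      ∀ j, j < n → j ≠ i → P i ∘L P j = 0) ∧
    (∀ i j, i < n → j < n → TransOne a b g i j → ∀ S, IsShiftOp n a b g ex j (w i j) S →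
      S.adjoint ∘L S = P j ∧ P i ∘L (S ∘L S.adjoint) = S ∘L S.adjoint ∧
      S ∘L S.adjoint ∘L S = S) ∧
    (∀ i, i < n → ex ∉ g '' Ioo (a i) (b i) →
      ∀ Sc : ℕ → (lp (fun _ : ↥(orbitSet n a b g ex) => ℂ) 2 →L[ℂ]
        lp (fun _ : ↥(orbitSet n a b g ex) => ℂ) 2),
        (∀ j, j < n → TransOne a b g i j → IsShiftOp n a b g ex j (w i j) (Sc j)) →
        P i = ∑ j ∈ (Finset.range n).filter (fun j => TransOne a b g i j),
          Sc j ∘L (Sc j).adjoint) := by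
  have hPcell i : P i = coordProj ℂ (orbitCell n a b g ex i) := eq_coordProj_orbitCell (hP i)
  refine ⟨fun i j hi hj ht => ?_, fun i hi => ⟨?_, ?_, fun j hj hji => ?_⟩,
    fun i j hi hj ht S hS => ?_, fun i hi hescape Sc hSc => ?_⟩
  · simp only [isShiftOp_iff_eq_partialShift (hw i j hi hj ht).injOn, existsUnique_eq]
  · rw [hPcell, adjoint_coordProj]
  · rw [hPcell, coordProj_comp_coordProj, inter_self]
  · rw [hPcell, hPcell, coordProj_comp_coordProj,
      (hg.disjoint_orbitCell hex hi hj hji.symm).inter_eq, coordProj_empty]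
  · have hbranch := hw i j hi hj ht
    refine ⟨?_, ?_, hS.self_comp_adjoint_comp_self hbranch.injOn⟩
    · rw [hPcell, hS.adjoint_comp_self hbranch.injOn]
    · rw [hPcell, hS.self_comp_adjoint hbranch.injOn, coordProj_comp_coordProj,
        inter_eq_right.2 hbranch.image_subset]
  · rw [hPcell, coordProj_orbitCell_eq_sum hg hex hi hescape fun j hj => hw i j hi hj]
    refine Finset.sum_congr rfl fun j hj => ?_
    obtain ⟨hj, ht⟩ := Finset.mem_filter.1 hj
    rw [Finset.mem_range] at hj
    exact ((hSc j hj ht).self_comp_adjoint (hw i j hi hj ht).injOn).symm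

open scoped Classical in
/-- On `ℓ²(X)`:  for each pair `(i,j)` with `a_{ij} = 1` there is a
unique bounded operator `S_{ij}` with `S_{ij} δ_y = δ_{(g|I_i)⁻¹ y}` for `y ∈ I_j ∩ X`
and `S_{ij} δ_y = 0` for `y ∈ X \ I_j`; with `P_i` multiplication by `χ_{I_i ∩ X}`:
(i) the `P_i` are self-adjoint idempotents with `P_i P_j = 0` for `i ≠ j`;
(ii) `S_{ij}* S_{ij} = P_j`;  (iii) `P_i S_{ij} S_{ij}* = S_{ij} S_{ij}*` (so
`S_{ij} S_{ij}* ≤ P_i`) and `S_{ij} S_{ij}* S_{ij} = S_{ij}` (each `S_{ij}` is a partial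
isometry);  (iv) if `â_{i ι(x)} = 0` and `i` emits at least one edge then
`P_i = Σ_{j : a_{ij} = 1} S_{ij} S_{ij}*`. -/
theorem statement14 (n : ℕ) (a b : ℕ → ℝ) (g : ℝ → ℝ) (hg : IsMarkovMap n a b g)
    (hΓ : ∀ y ∈ mGamma n a b ∩ mDom n a b, g y ∈ mGamma n a b)
    (x : ℝ) (hxI : x ∈ Icc (a 0) (b (n - 1)))
    (τx : ℕ) (hτ1 : 1 ≤ τx) (hτdef : IterDef g (mDom n a b) τx x)
    (hτesc : g^[τx] x ∈ mEsc n a b)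
    (hτmin : ∀ k, 1 ≤ k → IterDef g (mDom n a b) k x → g^[k] x ∈ mEsc n a b → τx ≤ k)
    (kι : ℕ) (hkι : kι + 1 < n) (hexE : g^[τx] x ∈ Ioo (b kι) (a (kι + 1)))
    (wmap : ℕ → ℕ → ↥(orbitSet n a b g (g^[τx] x)) → ↥(orbitSet n a b g (g^[τx] x)))
    (hw : ∀ i j, i < n → j < n → TransOne a b g i j →
      ∀ y : ↥(orbitSet n a b g (g^[τx] x)), (y : ℝ) ∈ Icc (a j) (b j) →
        (wmap i j y : ℝ) ∈ Icc (a i) (b i) ∧ g (wmap i j y) = y ∧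
        ∀ u : ↥(orbitSet n a b g (g^[τx] x)),
          (u : ℝ) ∈ Icc (a i) (b i) → g u = y → u = wmap i j y)
    (P : ℕ → (lp (fun _ : ↥(orbitSet n a b g (g^[τx] x)) => ℂ) 2 →L[ℂ]
      lp (fun _ : ↥(orbitSet n a b g (g^[τx] x)) => ℂ) 2))
    (hP : ∀ i, ∀ ψ : lp (fun _ : ↥(orbitSet n a b g (g^[τx] x)) => ℂ) 2,
      ∀ z : ↥(orbitSet n a b g (g^[τx] x)),
        (P i ψ) z = (Icc (a i) (b i)).indicator (fun _ => (1 : ℂ)) (z : ℝ) * ψ z) :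
    (∀ i j, i < n → j < n → TransOne a b g i j →
      ∃! S, IsShiftOp n a b g (g^[τx] x) j (wmap i j) S) ∧
    (∀ i, i < n → ContinuousLinearMap.adjoint (P i) = P i ∧ P i ∘L P i = P i ∧
      ∀ j, j < n → j ≠ i → P i ∘L P j = 0) ∧
    (∀ i j, i < n → j < n → TransOne a b g i j →
      ∀ S, IsShiftOp n a b g (g^[τx] x) j (wmap i j) S →
        ContinuousLinearMap.adjoint S ∘L S = P j ∧
        P i ∘L (S ∘L ContinuousLinearMap.adjoint S) = S ∘L ContinuousLinearMap.adjoint S ∧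
        S ∘L ContinuousLinearMap.adjoint S ∘L S = S) ∧
    (∀ i, i < n → Ioo (a i) (b i) ∩ g ⁻¹' (Ioo (b kι) (a (kι + 1))) = ∅ →
      (∃ j, j < n ∧ TransOne a b g i j) →
      ∀ Sc : ℕ → (lp (fun _ : ↥(orbitSet n a b g (g^[τx] x)) => ℂ) 2 →L[ℂ]
        lp (fun _ : ↥(orbitSet n a b g (g^[τx] x)) => ℂ) 2),
        (∀ j, j < n → TransOne a b g i j →
          IsShiftOp n a b g (g^[τx] x) j (wmap i j) (Sc j)) →
        P i = ∑ j ∈ (Finset.range n).filter (fun j => TransOne a b g i j),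
          Sc j ∘L ContinuousLinearMap.adjoint (Sc j)) := by
  have hm := hg.isMarkovPartition hΓ
  obtain ⟨hS, hProj, hrel, hsum⟩ :=
    statement14_general hm (hm.notMem_mDom_of_mem_escape hkι hexE) hw hP
  exact ⟨hS, hProj, hrel, fun i hi hempty _ Sc hSc => hsum i hi
    (fun ⟨_, hu, hgu⟩ => hempty.subset ⟨hu, mem_preimage.2 (hgu ▸ hexE)⟩) Sc hSc⟩

end
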